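/- arXiv:1205.1920 — 3 statements merged into one kernel-verified Lean document; each statement's English description precedes it below -/
import Mathlib

section
/- Efficient information in a reparametrized model (Theorem 3.1, formula (3.7)): Under the same hypotheses (i)–(vi) as in the efficient-score identity of Theorem 3.1 (normalization, score identity for ℓ̇₂, mean-zero profile score ℓ̇*, stationarity with interchange, differentiation under the integral, and invertibility of G₂₂ := Σ_{s=1}^S w_s E_{s,0}[ℓ̇₂ᶜ ℓ̇₂ᶜᵀ]), and assuming additionally that all entries of ℓ̇₁ᶜ and ℓ̇₂ᶜ are square-integrable with respect to each p_{s,0} dμ_s, the matrix I* := Σ_{s=1}^S w_s E_{s,0}[ℓ̇*(s, ·) ℓ̇*(s, ·)ᵀ] satisfies I* = G₁₁ − G₁₂ G₂₂⁻¹ G₂₁, where G₁₁ := Σ_{s=1}^S w_s E_{s,0}[ℓ̇₁ᶜ ℓ̇₁ᶜᵀ] ∈ ℝ^{m×m}, G₁₂ := Σ_{s=1}^S w_s E_{s,0}[ℓ̇₁ᶜ ℓ̇₂ᶜᵀ] ∈ ℝ^{m×k}, and G₂₁ = G₁₂ᵀ. -/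
open MeasureTheory

/-!
By the chain rule the profile score is `ℓ̇* = ℓ̇₁ + ℓ̇₂ A`, where `A` is the Jacobian of `β ↦ q_β`
at `β₀` and scores are row vectors; since `ℓ̇*` has mean zero, also `ℓ̇* = ℓ̇₁ᶜ + ℓ̇₂ᶜ A`.
Differentiating the score identity for `ℓ̇₂` along `β ↦ q_β` and using stationarity shows that
`ℓ̇*` is orthogonal to `ℓ̇₂`, hence to `ℓ̇₂ᶜ`. So `ℓ̇*` is the residual of the projection of `ℓ̇₁ᶜ`
on the span of `ℓ̇₂ᶜ`, and its second moment matrix is the Schur complement of `G₂₂`.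
-/

open Filter Function Topology
open scoped ENNReal Matrix

section Calculus

lemma measurable_of_forall_hasDerivAt {X 𝕜 E : Type*} [MeasurableSpace X]
    [NontriviallyNormedField 𝕜] [NormedAddCommGroup E] [NormedSpace 𝕜 E] [MeasurableSpace E]
    [BorelSpace E] [SecondCountableTopology E] {F : X → 𝕜 → E} {F' : X → E} {t : 𝕜}
    (hF : ∀ b, Measurable fun x => F x b) (hF' : ∀ x, HasDerivAt (F x) (F' x) t) :
    Measurable F' :=
  measurable_of_tendsto_metrizable' (𝓝[≠] t) (f := fun b x => slope (F x) t b)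
    (fun b => ((hF b).sub (hF t)).const_smul (b - t)⁻¹)
    (tendsto_pi_nhds.2 fun x => hasDerivAt_iff_tendsto_slope.1 (hF' x))

variable {ι κ : Type*} [DecidableEq ι]

lemma hasDerivAt_comp_update [Finite ι] {𝕜 E : Type*} [NontriviallyNormedField 𝕜]
    [NormedAddCommGroup E] [NormedSpace 𝕜 E] {F : (ι → 𝕜) → E} {F' : (ι → 𝕜) →L[𝕜] E}
    {β : ι → 𝕜}
    (hF : HasFDerivAt F F' β) (i : ι) :
    HasDerivAt (fun b => F (update β i b)) (F' (Pi.single i 1)) (β i) := by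
  cases nonempty_fintype ι
  exact HasFDerivAt.comp_hasDerivAt (β i) (by rwa [update_eq_self]) (hasDerivAt_update β i (β i))

lemma partialDeriv_eq_zero_of_eqOn_nhds [Finite ι] {F : (ι → ℝ) → ℝ} {β : ι → ℝ}
    {U : Set (ι → ℝ)} (hU : U ∈ 𝓝 β) (hF : ∀ b ∈ U, F b = 0) {i : ι} {d : ℝ}
    (hd : HasDerivAt (fun b => F (update β i b)) d (β i)) : d = 0 := by
  have hFzero : F =ᶠ[𝓝 β] fun _ => 0 := eventually_of_mem hU hF
  exact hd.unique (hasDerivAt_comp_update ((hasFDerivAt_const 0 β).congr_of_eventuallyEq hFzero) i)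

lemma profile_partialDeriv_eq_add_vecMul [Fintype ι] [Fintype κ] [DecidableEq κ]
    {L : (ι → ℝ) × (κ → ℝ) → ℝ} {q : (ι → ℝ) → κ → ℝ} {β : ι → ℝ}
    (hL : DifferentiableAt ℝ L (β, q β)) (hq : DifferentiableAt ℝ q β)
    {d₁ d : ι → ℝ} {d₂ : κ → ℝ}
    (h₁ : ∀ i, HasDerivAt (fun b => L (update β i b, q β)) (d₁ i) (β i))
    (h₂ : ∀ j, HasDerivAt (fun c => L (β, update (q β) j c)) (d₂ j) (q β j))
    (h : ∀ i, HasDerivAt (fun b => L (update β i b, q (update β i b))) (d i) (β i)) :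
    d = d₁ + d₂ ᵥ* (fderiv ℝ q β).toLinearMap.toMatrix' := by
  set L' := fderiv ℝ L (β, q β)
  set q' := fderiv ℝ q β
  have hd₁ (i) : d₁ i = L' (Pi.single i 1, 0) := (h₁ i).unique <|
    hasDerivAt_comp_update (hL.hasFDerivAt.comp β (hasFDerivAt_prodMk_left β (q β))) i
  have hd₂ (j) : d₂ j = L' (0, Pi.single j 1) := (h₂ j).unique <|
    hasDerivAt_comp_update (hL.hasFDerivAt.comp (q β) (hasFDerivAt_prodMk_right β (q β))) j
  have hd (i) : d i = L' (Pi.single i 1, q' (Pi.single i 1)) := (h i).unique <|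
    hasDerivAt_comp_update (hL.hasFDerivAt.comp β ((hasFDerivAt_id β).prodMk hq.hasFDerivAt)) i
  have hL'_snd (v : κ → ℝ) : L' (0, v) = ∑ j, d₂ j * v j := by
    have hsum : ((0 : ι → ℝ), v) = ∑ j, v j • (0, Pi.single j 1) := by
      simpa [← Pi.single_smul] using
        congr_arg (LinearMap.inr ℝ (ι → ℝ) (κ → ℝ)) (Finset.univ_sum_single v).symm
    simp only [hsum, map_sum, map_smul, smul_eq_mul, hd₂, mul_comm]
  ext i
  calc d i = L' (Pi.single i 1, 0) + L' (0, q' (Pi.single i 1)) := by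
        rw [hd, ← map_add, Prod.mk_add_mk, add_zero, zero_add]
    _ = (d₁ + d₂ ᵥ* q'.toLinearMap.toMatrix') i := by
        simp only [Pi.add_apply, Matrix.vecMul, dotProduct, LinearMap.toMatrix'_apply, hL'_snd, hd₁,
          ContinuousLinearMap.coe_coe]

end Calculus

section Centering

variable {X E ι κ : Type*} [MeasurableSpace X] {P : Measure X} {p : ℝ≥0∞}

section Normed

variable [NormedAddCommGroup E] [NormedSpace ℝ E] {f : X → E}

-- A nonzero mean `c` makes `f` integrable, and `‖f - c‖ > ‖c‖ / 2` wherever `‖f‖ < ‖c‖ / 2`, so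
-- Markov's inequality for `f` and for `f - c` bounds the total mass.
lemma isFiniteMeasure_or_integral_eq_zero (hp₀ : p ≠ 0) (hp : p ≠ ∞)
    (hf : MemLp (fun x => f x - ∫ y, f y ∂P) p P) :
    IsFiniteMeasure P ∨ ∫ x, f x ∂P = 0 := by
  set c := ∫ y, f y ∂P
  refine or_iff_not_imp_right.2 fun hc₀ => ⟨?_⟩
  have hf_int : Integrable f P := not_imp_comm.1 integral_undef hc₀
  have hε : 0 < ‖c‖ / 2 := half_pos (norm_pos_iff.2 hc₀)
  have hcover : Set.univ ⊆ {x | ‖c‖ / 2 ≤ ‖f x‖} ∪ {x | (‖c‖ / 2).toNNReal ≤ ‖f x - c‖₊} := by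
    intro x _
    have htri : ‖c‖ ≤ ‖f x‖ + ‖f x - c‖ := by simpa using norm_sub_le (f x) (f x - c)
    simp only [Set.mem_union, Set.mem_ofPred_eq, Real.toNNReal_le_iff_le_coe, coe_nnnorm]
    by_contra! hlt
    linarith
  exact (measure_mono hcover).trans_lt <| measure_union_lt_top
    (hf_int.measure_norm_ge_lt_top hε) (hf.meas_ge_lt_top hp₀ hp (Real.toNNReal_pos.2 hε).ne')

lemma memLp_of_memLp_sub_integral (hp₀ : p ≠ 0) (hp : p ≠ ∞)
    (hf : MemLp (fun x => f x - ∫ y, f y ∂P) p P) : MemLp f p P := by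
  have hconst : MemLp (fun _ => ∫ y, f y ∂P) p P := by
    rw [memLp_const_iff hp₀ hp, or_comm, ← isFiniteMeasure_iff]
    exact isFiniteMeasure_or_integral_eq_zero hp₀ hp hf
  exact (memLp_congr_ae (.of_forall fun x => by simp)).1 (hf.add hconst)

end Normed

/-- The centered random vector `f - E_P[f]`. The mean is taken coordinatewise, so that a
non-integrable coordinate (whose Bochner integral is `0`) does not affect the other ones. -/
noncomputable def centered (P : Measure X) (f : X → ι → ℝ) (x : X) (i : ι) : ℝ :=
  f x i - ∫ y, f y i ∂P

lemma memLp_add_vecMul [Fintype κ] {u : X → ι → ℝ} {v : X → κ → ℝ} {A : Matrix κ ι ℝ} {i : ι}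
    (hu : MemLp (u · i) p P) (hv : ∀ j, MemLp (v · j) p P) :
    MemLp (fun x => (u x + v x ᵥ* A) i) p P :=
  hu.add (memLp_finsetSum _ fun j _ => (hv j).mul_const (A j i))

lemma add_vecMul_eq_centered [Fintype κ] {u : X → ι → ℝ} {v : X → κ → ℝ} {A : Matrix κ ι ℝ}
    (hp₁ : 1 ≤ p) (hp : p ≠ ∞) (hu : ∀ i, MemLp (centered P u · i) p P)
    (hv : ∀ j, MemLp (centered P v · j) p P) (hmean : ∀ i, ∫ x, (u x + v x ᵥ* A) i ∂P = 0) (x : X) :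
    u x + v x ᵥ* A = centered P u x + centered P v x ᵥ* A := by
  have hp₀ : p ≠ 0 := (zero_lt_one.trans_le hp₁).ne'
  ext i
  have hmeans : ∫ y, u y i ∂P + ∑ j, (∫ y, v y j ∂P) * A j i = 0 := by
    by_cases hP : IsFiniteMeasure P
    · have hu_int : Integrable (u · i) P :=
        (memLp_of_memLp_sub_integral hp₀ hp (hu i)).integrable hp₁
      have hv_int (j) : Integrable (v · j) P :=
        (memLp_of_memLp_sub_integral hp₀ hp (hv j)).integrable hp₁
      rw [← hmean i]
      simp only [Pi.add_apply, Matrix.vecMul, dotProduct]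
      rw [integral_add hu_int (integrable_finsetSum _ fun j _ => (hv_int j).mul_const _),
        integral_finsetSum _ fun j _ => (hv_int j).mul_const _]
      simp only [integral_mul_const]
    · have hu₀ := (isFiniteMeasure_or_integral_eq_zero hp₀ hp (hu i)).resolve_left hP
      have hv₀ (j) := (isFiniteMeasure_or_integral_eq_zero hp₀ hp (hv j)).resolve_left hP
      simp only [hu₀, hv₀, zero_mul, Finset.sum_const_zero, add_zero]
  simp only [centered, Pi.add_apply, Matrix.vecMul, dotProduct, sub_mul, Finset.sum_sub_distrib]
  linarith

lemma integral_centered_mul {v : X → κ → ℝ} {r : X → ℝ} {j : κ}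
    (hv : MemLp (centered P v · j) 2 P) (hr : MemLp r 2 P) (hr_mean : ∫ x, r x ∂P = 0) :
    ∫ x, centered P v x j * r x ∂P = ∫ x, v x j * r x ∂P := by
  have hv_memLp : MemLp (v · j) 2 P :=
    memLp_of_memLp_sub_integral two_ne_zero ENNReal.ofNat_ne_top hv
  have hsub : ∫ x, v x j * r x ∂P - ∫ x, centered P v x j * r x ∂P =
      ∫ x, (∫ y, v y j ∂P) * r x ∂P := by
    refine (integral_sub (hv_memLp.integrable_mul hr) (hv.integrable_mul hr)).symm.trans ?_
    simp only [Pi.mul_apply, centered, ← sub_mul, sub_sub_cancel]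
  rw [integral_const_mul, hr_mean, mul_zero] at hsub
  exact (sub_eq_zero.1 hsub).symm

end Centering

section MomentMatrix

variable {σ ι κ τ : Type*} [Fintype σ] {X : σ → Type*} [∀ s, MeasurableSpace (X s)]
  {w : σ → ℝ} {P : ∀ s, Measure (X s)}

/-- The mixed second moment matrix `Σ_s w_s E_s[f gᵀ]` of two families of random vectors in the
multisample setting, with `E_s` the integral with respect to `P s`. -/
noncomputable def momentMatrix (w : σ → ℝ) (P : ∀ s, Measure (X s))
    (f : ∀ s, X s → ι → ℝ) (g : ∀ s, X s → κ → ℝ) : Matrix ι κ ℝ :=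
  .of fun i j => ∑ s, w s * ∫ x, f s x i * g s x j ∂P s

lemma transpose_momentMatrix (f : ∀ s, X s → ι → ℝ) (g : ∀ s, X s → κ → ℝ) :
    (momentMatrix w P f g)ᵀ = momentMatrix w P g f := by
  ext i j
  simp only [momentMatrix, Matrix.transpose_apply, Matrix.of_apply, mul_comm]

variable [Fintype κ] {f : ∀ s, X s → ι → ℝ} {g : ∀ s, X s → κ → ℝ} {h : ∀ s, X s → τ → ℝ}
  {A : Matrix κ ι ℝ}

lemma momentMatrix_add_vecMul (hf : ∀ s i, MemLp (f s · i) 2 (P s))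
    (hg : ∀ s j, MemLp (g s · j) 2 (P s)) (hh : ∀ s l, MemLp (h s · l) 2 (P s)) :
    momentMatrix w P h (fun s x => f s x + g s x ᵥ* A) =
      momentMatrix w P h f + momentMatrix w P h g * A := by
  ext l i
  have hint (s) : ∫ x, h s x l * (f s x + g s x ᵥ* A) i ∂P s =
      ∫ x, h s x l * f s x i ∂P s + ∑ j, (∫ x, h s x l * g s x j ∂P s) * A j i := by
    have hhf : Integrable (fun x => h s x l * f s x i) (P s) := (hh s l).integrable_mul (hf s i)
    have hhg (j) : Integrable (fun x => h s x l * g s x j * A j i) (P s) :=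
      ((hh s l).integrable_mul (hg s j)).mul_const _
    simp only [Pi.add_apply, Matrix.vecMul, dotProduct, mul_add, Finset.mul_sum, ← mul_assoc]
    rw [integral_add hhf (integrable_finsetSum _ fun j _ => hhg j),
      integral_finsetSum _ fun j _ => hhg j]
    simp only [integral_mul_const]
  simp only [momentMatrix, Matrix.of_apply, Matrix.add_apply, Matrix.mul_apply, hint, mul_add,
    Finset.sum_add_distrib, Finset.mul_sum, Finset.sum_mul, mul_assoc]
  rw [Finset.sum_comm (γ := κ)]

lemma momentMatrix_residual_eq_schurComplement [DecidableEq κ]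
    (hf : ∀ s i, MemLp (f s · i) 2 (P s)) (hg : ∀ s j, MemLp (g s · j) 2 (P s))
    (hdet : IsUnit (momentMatrix w P g g).det)
    (horth : momentMatrix w P g (fun s x => f s x + g s x ᵥ* A) = 0) :
    momentMatrix w P (fun s x => f s x + g s x ᵥ* A) (fun s x => f s x + g s x ᵥ* A) =
      momentMatrix w P f f -
        momentMatrix w P f g * (momentMatrix w P g g)⁻¹ * (momentMatrix w P f g)ᵀ := by
  set r := fun s x => f s x + g s x ᵥ* A
  have hr (s i) : MemLp (r s · i) 2 (P s) := memLp_add_vecMul (hf s i) (hg s)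
  have hA : A = -((momentMatrix w P g g)⁻¹ * momentMatrix w P g f) := by
    rw [momentMatrix_add_vecMul hf hg hg] at horth
    rw [← Matrix.mul_neg, ← eq_neg_of_add_eq_zero_right horth,
      Matrix.nonsing_inv_mul_cancel_left _ _ hdet]
  have hrg : momentMatrix w P r g = 0 := by
    rw [← transpose_momentMatrix, horth, Matrix.transpose_zero]
  calc momentMatrix w P r r
      = (momentMatrix w P r r)ᵀ := (transpose_momentMatrix r r).symm
    _ = (momentMatrix w P r f)ᵀ := by
      rw [momentMatrix_add_vecMul hf hg hr, hrg, Matrix.zero_mul, add_zero]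
    _ = momentMatrix w P f r := transpose_momentMatrix r f
    _ = momentMatrix w P f f + momentMatrix w P f g * A := momentMatrix_add_vecMul hf hg hf
    _ = _ := by
      rw [hA, Matrix.mul_neg, ← sub_eq_add_neg, Matrix.mul_assoc, transpose_momentMatrix]

lemma momentMatrix_meanZero_eq_schurComplement [DecidableEq κ]
    (hf : ∀ s i, MemLp (centered (P s) (f s) · i) 2 (P s))
    (hg : ∀ s j, MemLp (centered (P s) (g s) · j) 2 (P s)) {r : ∀ s, X s → ι → ℝ}
    (hr : ∀ s x, r s x = f s x + g s x ᵥ* A) (hr_mean : ∀ s i, ∫ x, r s x i ∂P s = 0)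
    (hdet : IsUnit
      (momentMatrix w P (fun s => centered (P s) (g s)) fun s => centered (P s) (g s)).det)
    (horth : momentMatrix w P g r = 0) :
    let fc s := centered (P s) (f s)
    let gc s := centered (P s) (g s)
    momentMatrix w P r r = momentMatrix w P fc fc -
      momentMatrix w P fc gc * (momentMatrix w P gc gc)⁻¹ * (momentMatrix w P fc gc)ᵀ := by
  obtain rfl : r = fun s x => centered (P s) (f s) x + centered (P s) (g s) x ᵥ* A := by
    ext s x : 2
    rw [hr, add_vecMul_eq_centered one_le_two ENNReal.ofNat_ne_top (hf s) (hg s)]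
    simpa only [hr] using hr_mean s
  refine momentMatrix_residual_eq_schurComplement hf hg hdet ?_
  rw [← horth]
  ext j i
  simp only [momentMatrix, Matrix.of_apply,
    integral_centered_mul (hg _ j) (memLp_add_vecMul (hf _ i) (hg _)) (hr_mean _ i)]

end MomentMatrix

section Density

variable {X : Type*} [MeasurableSpace X] {μ : Measure X} {p f : X → ℝ}

/-- The measure `p dμ`; negative values of the real density `p` are truncated to `0`. -/
noncomputable def densityLaw (μ : Measure X) (p : X → ℝ) : Measure X :=
  μ.withDensity fun x => ENNReal.ofReal (p x)

lemma integral_densityLaw (hp : Measurable p) (hp₀ : ∀ x, 0 ≤ p x) (f : X → ℝ) :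
    ∫ x, f x ∂densityLaw μ p = ∫ x, f x * p x ∂μ := by
  rw [densityLaw, integral_withDensity_eq_integral_toReal_smul hp.ennreal_ofReal (by simp)]
  simp only [ENNReal.toReal_ofReal (hp₀ _), smul_eq_mul, mul_comm]

lemma memLp_two_densityLaw_iff (hp : Measurable p) (hp₀ : ∀ x, 0 ≤ p x) (hf : Measurable f) :
    MemLp f 2 (densityLaw μ p) ↔ Integrable (fun x => f x ^ 2 * p x) μ := by
  rw [memLp_two_iff_integrable_sq hf.aestronglyMeasurable, densityLaw,
    integrable_withDensity_iff hp.ennreal_ofReal (by simp)]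
  simp only [ENNReal.toReal_ofReal (hp₀ _)]

end Density

theorem stmt_3_general {σ ι κ : Type*} [Fintype σ] [Finite ι] [DecidableEq ι] [Fintype κ]
    [DecidableEq κ] {X : σ → Type*} [∀ s, MeasurableSpace (X s)] {μ : ∀ s, Measure (X s)}
    {w : σ → ℝ} {β₀ : ι → ℝ} {q₀ : κ → ℝ}
    {pstar : ∀ s, X s → (ι → ℝ) → (κ → ℝ) → ℝ} (hpos : ∀ s x, 0 < pstar s x β₀ q₀)
    (hmeas : ∀ s β q, Measurable fun x => pstar s x β q)
    (hdiff : ∀ s x, DifferentiableAt ℝ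
      (fun bq : (ι → ℝ) × (κ → ℝ) => pstar s x bq.1 bq.2) (β₀, q₀))
    {qmap : (ι → ℝ) → κ → ℝ} (hqmap : DifferentiableAt ℝ qmap β₀) (hqmap0 : qmap β₀ = q₀)
    {p0 : ∀ s, X s → ℝ} (hp0 : ∀ s x, p0 s x = pstar s x β₀ q₀)
    {ℓ1 : ∀ s, X s → ι → ℝ}
    (hℓ1 : ∀ s x i, HasDerivAt (fun b => Real.log (pstar s x (update β₀ i b) q₀))
      (ℓ1 s x i) (β₀ i))
    {ℓ2 : ∀ s, X s → κ → ℝ}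
    (hℓ2 : ∀ s x j, HasDerivAt (fun c => Real.log (pstar s x β₀ (update q₀ j c)))
      (ℓ2 s x j) (q₀ j))
    {lstar : ∀ s, X s → ι → ℝ}
    (hlstar : ∀ s x i, HasDerivAt
      (fun b => Real.log (pstar s x (update β₀ i b) (qmap (update β₀ i b)))) (lstar s x i) (β₀ i))
    (hmean : ∀ s i, ∫ x, lstar s x i * p0 s x ∂μ s = 0)
    (horth : ∀ j i, ∑ s, w s * ∫ x, ℓ2 s x j * lstar s x i * p0 s x ∂μ s = 0)
    {ℓ1c : ∀ s, X s → ι → ℝ}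
    (hℓ1c : ∀ s x i, ℓ1c s x i = ℓ1 s x i - ∫ y, ℓ1 s y i * p0 s y ∂μ s)
    {ℓ2c : ∀ s, X s → κ → ℝ}
    (hℓ2c : ∀ s x j, ℓ2c s x j = ℓ2 s x j - ∫ y, ℓ2 s y j * p0 s y ∂μ s)
    {G22 : Matrix κ κ ℝ}
    (hG22 : ∀ j j', G22 j j' = ∑ s, w s * ∫ x, ℓ2c s x j * ℓ2c s x j' * p0 s x ∂μ s)
    (hG22_inv : IsUnit G22.det) {G12 : Matrix ι κ ℝ}
    (hG12 : ∀ i j, G12 i j = ∑ s, w s * ∫ x, ℓ1c s x i * ℓ2c s x j * p0 s x ∂μ s)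
    (hℓ1c_sq : ∀ s i, Integrable (fun x => ℓ1c s x i ^ 2 * p0 s x) (μ s))
    (hℓ2c_sq : ∀ s j, Integrable (fun x => ℓ2c s x j ^ 2 * p0 s x) (μ s))
    {G11 : Matrix ι ι ℝ}
    (hG11 : ∀ i i', G11 i i' = ∑ s, w s * ∫ x, ℓ1c s x i * ℓ1c s x i' * p0 s x ∂μ s)
    {Istar : Matrix ι ι ℝ}
    (hIstar : ∀ i i', Istar i i' = ∑ s, w s * ∫ x, lstar s x i * lstar s x i' * p0 s x ∂μ s) :
    Istar = G11 - G12 * G22⁻¹ * G12ᵀ := by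
  cases nonempty_fintype ι
  subst hqmap0
  obtain rfl : p0 = fun s x => pstar s x β₀ (qmap β₀) := by ext s x; exact hp0 s x
  let P s := densityLaw (μ s) fun x => pstar s x β₀ (qmap β₀)
  have hP (s) := integral_densityLaw (μ := μ s) (hmeas s β₀ (qmap β₀)) fun x => (hpos s x).le
  have hP_sq {s} {f : X s → ℝ} := memLp_two_densityLaw_iff (μ := μ s) (f := f)
    (hmeas s β₀ (qmap β₀)) fun x => (hpos s x).le
  simp only [← hP] at hmean horth hℓ1c hℓ2c hG22 hG12 hG11 hIstar
  have hℓ1_meas (s i) : Measurable (ℓ1 s · i) :=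
    measurable_of_forall_hasDerivAt (fun b => (hmeas s _ _).log) (hℓ1 s · i)
  have hℓ2_meas (s j) : Measurable (ℓ2 s · j) :=
    measurable_of_forall_hasDerivAt (fun c => (hmeas s _ _).log) (hℓ2 s · j)
  obtain rfl : ℓ1c = fun s => centered (P s) (ℓ1 s) := by ext s x i; exact hℓ1c s x i
  obtain rfl : ℓ2c = fun s => centered (P s) (ℓ2 s) := by ext s x j; exact hℓ2c s x j
  obtain rfl : G22 = momentMatrix w P _ _ := Matrix.ext hG22
  obtain rfl : G12 = momentMatrix w P _ _ := Matrix.ext hG12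
  obtain rfl : G11 = momentMatrix w P _ _ := Matrix.ext hG11
  obtain rfl : Istar = momentMatrix w P _ _ := Matrix.ext hIstar
  have hchain (s x) := profile_partialDeriv_eq_add_vecMul
    ((hdiff s x).log (hpos s x).ne') hqmap (hℓ1 s x) (hℓ2 s x) (hlstar s x)
  exact momentMatrix_meanZero_eq_schurComplement
    (fun s i => (hP_sq ((hℓ1_meas s i).sub_const _)).2 (hℓ1c_sq s i))
    (fun s j => (hP_sq ((hℓ2_meas s j).sub_const _)).2 (hℓ2c_sq s j))
    hchain hmean hG22_inv (Matrix.ext horth)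

/-- Efficient information in a reparametrized model (Theorem 3.1, formula (3.7)). -/
theorem stmt_3
    (S m k : ℕ) (hS : 0 < S)
    (X : Fin S → Type) [∀ s, MeasurableSpace (X s)]
    (μ : ∀ s, Measure (X s)) [∀ s, SigmaFinite (μ s)]
    (w : Fin S → ℝ) (hw_pos : ∀ s, 0 < w s) (hw_sum : ∑ s, w s = 1)
    (Θβ : Set (Fin m → ℝ)) (hΘβ : IsOpen Θβ)
    (Dq : Set (Fin k → ℝ)) (hDq : IsOpen Dq)
    (β₀ : Fin m → ℝ) (hβ₀ : β₀ ∈ Θβ)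
    (q₀ : Fin k → ℝ) (hq₀ : q₀ ∈ Dq)
    -- the reparametrized model: positive, measurable in x, C² in (β, q)
    (pstar : ∀ s : Fin S, X s → (Fin m → ℝ) → (Fin k → ℝ) → ℝ)
    (hpos : ∀ s x β q, 0 < pstar s x β q)
    (hmeas : ∀ s β q, Measurable fun x => pstar s x β q)
    (hsmooth : ∀ s x, ContDiff ℝ 2 fun bq : (Fin m → ℝ) × (Fin k → ℝ) => pstar s x bq.1 bq.2)
    -- the C¹ map β ↦ q_β with q_{β₀} = q₀
    (qmap : (Fin m → ℝ) → Fin k → ℝ) (hqmap : ContDiff ℝ 1 qmap)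
    (hqmap0 : qmap β₀ = q₀) (hqmap_mem : ∀ β ∈ Θβ, qmap β ∈ Dq)
    -- true densities
    (p0 : ∀ s : Fin S, X s → ℝ) (hp0 : ∀ s x, p0 s x = pstar s x β₀ q₀)
    -- score function for β : ℓ̇₁(s,x;β,q) = ∂_β log p*_s(x;β,q)
    (ℓ1 : ∀ s : Fin S, X s → (Fin m → ℝ) → (Fin k → ℝ) → Fin m → ℝ)
    (hℓ1 : ∀ s x β q i, HasDerivAt (fun b => Real.log (pstar s x (Function.update β i b) q))
      (ℓ1 s x β q i) (β i))
    -- score function for q : ℓ̇₂(s,x;β,q) = ∂_q log p*_s(x;β,q)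
    (ℓ2 : ∀ s : Fin S, X s → (Fin m → ℝ) → (Fin k → ℝ) → Fin k → ℝ)
    (hℓ2 : ∀ s x β q j, HasDerivAt (fun c => Real.log (pstar s x β (Function.update q j c)))
      (ℓ2 s x β q j) (q j))
    -- profile (efficient) score ℓ̇*(s,x) = ∂_β|_{β₀} log p*_s(x;β,q_β)
    (lstar : ∀ s : Fin S, X s → Fin m → ℝ)
    (hlstar : ∀ s x i, HasDerivAt
      (fun b => Real.log (pstar s x (Function.update β₀ i b) (qmap (Function.update β₀ i b))))
      (lstar s x i) (β₀ i))
    -- ∂_β|_{β₀} ℓ̇₂(s,x;β,q_β)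
    (Dl2 : ∀ s : Fin S, X s → Fin k → Fin m → ℝ)
    (hDl2 : ∀ s x j i, HasDerivAt
      (fun b => ℓ2 s x (Function.update β₀ i b) (qmap (Function.update β₀ i b)) j)
      (Dl2 s x j i) (β₀ i))
    -- (i) normalization
    (hi : ∀ β ∈ Θβ, ∀ q ∈ Dq, ∑ s, w s * ∫ x, pstar s x β q ∂μ s = 1)
    -- (ii) score identity for ℓ̇₂
    (hii : ∀ β ∈ Θβ, ∀ q ∈ Dq, ∀ j,
      ∑ s, w s * ∫ x, ℓ2 s x β q j * pstar s x β q ∂μ s = 0)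
    -- (iii) the profile score has mean zero under each true density
    (hiii : ∀ s i, ∫ x, lstar s x i * p0 s x ∂μ s = 0)
    -- (iv) stationarity with interchange
    (hiv1 : ∀ j i, HasDerivAt
      (fun b => ∑ s, w s * ∫ x,
        ℓ2 s x (Function.update β₀ i b) (qmap (Function.update β₀ i b)) j * p0 s x ∂μ s)
      (∑ s, w s * ∫ x, Dl2 s x j i * p0 s x ∂μ s) (β₀ i))
    (hiv2 : ∀ j i, ∑ s, w s * ∫ x, Dl2 s x j i * p0 s x ∂μ s = 0)
    -- (v) differentiation under the integral sign
    (hv : ∀ j i, HasDerivAt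
      (fun b => ∑ s, w s * ∫ x,
        ℓ2 s x (Function.update β₀ i b) (qmap (Function.update β₀ i b)) j *
          pstar s x (Function.update β₀ i b) (qmap (Function.update β₀ i b)) ∂μ s)
      ((∑ s, w s * ∫ x, Dl2 s x j i * p0 s x ∂μ s) +
        ∑ s, w s * ∫ x, ℓ2 s x β₀ q₀ j * lstar s x i * p0 s x ∂μ s) (β₀ i))
    -- centered scores
    (ℓ1c : ∀ s : Fin S, X s → Fin m → ℝ)
    (hℓ1c : ∀ s x i, ℓ1c s x i = ℓ1 s x β₀ q₀ i - ∫ y, ℓ1 s y β₀ q₀ i * p0 s y ∂μ s)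
    (ℓ2c : ∀ s : Fin S, X s → Fin k → ℝ)
    (hℓ2c : ∀ s x j, ℓ2c s x j = ℓ2 s x β₀ q₀ j - ∫ y, ℓ2 s y β₀ q₀ j * p0 s y ∂μ s)
    -- (vi) invertibility of G₂₂
    (G22 : Matrix (Fin k) (Fin k) ℝ)
    (hG22 : ∀ j j', G22 j j' = ∑ s, w s * ∫ x, ℓ2c s x j * ℓ2c s x j' * p0 s x ∂μ s)
    (hG22_inv : IsUnit G22.det)
    (G12 : Matrix (Fin m) (Fin k) ℝ)
    (hG12 : ∀ i j, G12 i j = ∑ s, w s * ∫ x, ℓ1c s x i * ℓ2c s x j * p0 s x ∂μ s)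
    -- square integrability of the centered scores
    (hℓ1c_sq : ∀ s i, Integrable (fun x => (ℓ1c s x i) ^ 2 * p0 s x) (μ s))
    (hℓ2c_sq : ∀ s j, Integrable (fun x => (ℓ2c s x j) ^ 2 * p0 s x) (μ s))
    (G11 : Matrix (Fin m) (Fin m) ℝ)
    (hG11 : ∀ i i', G11 i i' = ∑ s, w s * ∫ x, ℓ1c s x i * ℓ1c s x i' * p0 s x ∂μ s)
    -- efficient information matrix I*
    (Istar : Matrix (Fin m) (Fin m) ℝ)
    (hIstar : ∀ i i', Istar i i' = ∑ s, w s * ∫ x, lstar s x i * lstar s x i' * p0 s x ∂μ s) :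
    Istar = G11 - G12 * G22⁻¹ * G12.transpose :=
  stmt_3_general (fun s x => hpos s x β₀ q₀) hmeas
    (fun s x => (hsmooth s x).differentiable two_ne_zero _) (hqmap.differentiable one_ne_zero _)
    hqmap0 hp0 (hℓ1 · · β₀ q₀) (hℓ2 · · β₀ q₀) hlstar hiii
    (fun j i => by
      simpa only [hiv2 j i, zero_add] using partialDeriv_eq_zero_of_eqOn_nhds (hΘβ.mem_nhds hβ₀)
        (fun β hβ => hii β hβ _ (hqmap_mem β hβ) j) (hv j i))
    hℓ1c hℓ2c hG22 hG22_inv hG12 hℓ1c_sq hℓ2c_sq hG11 hIstar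
end

section
/- Stationarity of the profile plug-in ĝ_θ in stratified sampling (Lemma 2.1 / Appendix B): Fix θ and suppose there exist positive reals Q̂_1(θ),…,Q̂_S(θ) such that, with ĝ_θ(x) := f*₀(x) / ( Σ_{s'=1}^S w_{s'} Q_{s'|X}(x; θ) / Q̂_{s'}(θ) ) (the denominator being strictly positive μ-a.e.), the fixed-point equations Q̂_s(θ) = ∫ Q_{s|X}(x; θ) ĝ_θ(x) dμ(x) hold for s = 1,…,S. Let t ↦ α_t be a path of measurable functions on X with α_0 = 0 and ĝ_θ + α_t ≥ 0, and assume differentiation under the integral sign: t ↦ ∫ log(ĝ_θ(x) + α_t(x)) f*₀(x) dμ(x) is differentiable at t = 0 with derivative ∫ (α'_0(x) / ĝ_θ(x)) f*₀(x) dμ(x), and for each s, t ↦ ∫ Q_{s|X}(x; θ)(ĝ_θ(x) + α_t(x)) dμ(x) is differentiable at t = 0 with derivative ∫ Q_{s|X}(x; θ) α'_0(x) dμ(x), where α'_0 := ∂_t α_t |_{t=0}, and both derivatives are finite. Then the derivative at t = 0 of the expected profile log-likelihood t ↦ ∫ log(ĝ_θ(x) + α_t(x)) f*₀(x) dμ(x)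 − Σ_{s=1}^S w_s log ∫ Q_{s|X}(x; θ)(ĝ_θ(x) + α_t(x)) dμ(x) is zero. -/
open MeasureTheory

/-!
Write `D x = ∑ s, w s * Q s x / Qhat s`, so that `ĝ = f / D`. For a path `g t` of nonnegative
functions through `ĝ` with velocity `g'`, the derivative of `∫ log (g t) f` is
`∫ (g' / ĝ) f = ∫ D g'`: where `ĝ ≠ 0` one has `f = D ĝ`, and where `ĝ = 0` the path is at a
minimum, so that `g' = 0` too. By the fixed-point equations `∫ Q s ĝ = Qhat s`, the derivative of
`∑ s, w s * log ∫ Q s (g t)` is `∑ s, w s * (∫ Q s g') / Qhat s`, which is again `∫ D g'`.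
-/

open Filter Topology

section Calculus

theorem hasDerivAt_eq_zero_of_nonneg_of_eq_zero {f : ℝ → ℝ} {f' a : ℝ} (hf : HasDerivAt f f' a)
    (hnonneg : ∀ᶠ t in 𝓝 a, 0 ≤ f t) (hzero : f a = 0) : f' = 0 := by
  have hmin : IsLocalMin f a := by
    filter_upwards [hnonneg] with t ht
    rwa [hzero]
  exact hmin.hasDerivAt_eq_zero hf

theorem hasDerivAt_sum_mul_log {ι : Type*} [Fintype ι] (w : ι → ℝ) {F : ι → ℝ → ℝ}
    {F' : ι → ℝ} {a : ℝ} (hF : ∀ s, HasDerivAt (F s) (F' s) a) (hne : ∀ s, F s a ≠ 0) :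
    HasDerivAt (fun t => ∑ s, w s * Real.log (F s t)) (∑ s, w s * (F' s / F s a)) a :=
  HasDerivAt.fun_sum fun s _ => ((hF s).log (hne s)).const_mul (w s)

end Calculus

section StratifiedSampling

variable {ι X : Type*} [Fintype ι]

/-- The factor `∑ s, w s * Q s x / Qhat s` by which stratified sampling multiplies the population
density at `x`, when the stratum `s` has kernel `Q s` and total mass `Qhat s`. -/
noncomputable def samplingFactor (w : ι → ℝ) (Q : ι → X → ℝ) (Qhat : ι → ℝ) (x : X) : ℝ :=
  ∑ s, w s * Q s x / Qhat s

/-- The profile plug-in `ĝ`: the population density recovered from the sampling density `f` by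
undoing the sampling factor. It takes the junk value `0` where that factor vanishes. -/
noncomputable def profilePlugIn (w : ι → ℝ) (Q : ι → X → ℝ) (Qhat : ι → ℝ) (f : X → ℝ)
    (x : X) : ℝ :=
  f x / samplingFactor w Q Qhat x

variable {w : ι → ℝ} {Q : ι → X → ℝ} {Qhat : ι → ℝ} {f : X → ℝ}

theorem div_profilePlugIn_mul {x : X} {v : ℝ} (hne : samplingFactor w Q Qhat x ≠ 0)
    (hv : profilePlugIn w Q Qhat f x = 0 → v = 0) :
    v / profilePlugIn w Q Qhat f x * f x = samplingFactor w Q Qhat x * v := by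
  by_cases hzero : profilePlugIn w Q Qhat f x = 0
  · simp [hv hzero]
  · have hf : f x = profilePlugIn w Q Qhat f x * samplingFactor w Q Qhat x :=
      (div_mul_cancel₀ _ hne).symm
    calc v / profilePlugIn w Q Qhat f x * f x
        = v / profilePlugIn w Q Qhat f x *
            (profilePlugIn w Q Qhat f x * samplingFactor w Q Qhat x) := congrArg _ hf
      _ = samplingFactor w Q Qhat x * v := by field_simp

variable [MeasurableSpace X] {μ : Measure X}

/-- The expected log-likelihood of the population density `g` under the sampling density `f`, up to
the terms that do not involve `g`. Each stratum contributes its normalizing constant `∫ Q s * g`. -/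
noncomputable def expectedProfileLogLikelihood (μ : Measure X) (w : ι → ℝ) (Q : ι → X → ℝ)
    (f g : X → ℝ) : ℝ :=
  (∫ x, Real.log (g x) * f x ∂μ) - ∑ s, w s * Real.log (∫ x, Q s x * g x ∂μ)

theorem integral_samplingFactor_mul {h : X → ℝ} (hint : ∀ s, Integrable (fun x => Q s x * h x) μ) :
    ∫ x, samplingFactor w Q Qhat x * h x ∂μ = ∑ s, w s * ((∫ x, Q s x * h x ∂μ) / Qhat s) := by
  calc ∫ x, samplingFactor w Q Qhat x * h x ∂μ
      = ∫ x, ∑ s, w s / Qhat s * (Q s x * h x) ∂μ := by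
        congr with x
        rw [samplingFactor, Finset.sum_mul]
        exact Finset.sum_congr rfl fun s _ => by ring
    _ = ∑ s, w s / Qhat s * ∫ x, Q s x * h x ∂μ := by
        rw [integral_finsetSum _ fun s _ => (hint s).const_mul _]
        simp only [integral_const_mul]
    _ = ∑ s, w s * ((∫ x, Q s x * h x ∂μ) / Qhat s) :=
        Finset.sum_congr rfl fun s _ => by ring

theorem integral_div_profilePlugIn_mul {g' : X → ℝ}
    (hne : ∀ᵐ x ∂μ, samplingFactor w Q Qhat x ≠ 0)
    (hg' : ∀ᵐ x ∂μ, profilePlugIn w Q Qhat f x = 0 → g' x = 0)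
    (hint : ∀ s, Integrable (fun x => Q s x * g' x) μ) :
    ∫ x, g' x / profilePlugIn w Q Qhat f x * f x ∂μ =
      ∑ s, w s * ((∫ x, Q s x * g' x ∂μ) / Qhat s) := by
  rw [← integral_samplingFactor_mul hint]
  refine integral_congr_ae ?_
  filter_upwards [hne, hg'] with x hx hx' using div_profilePlugIn_mul hx hx'

theorem stmt_8_general (hQhat : ∀ s, 0 < Qhat s)
    (hne : ∀ᵐ x ∂μ, samplingFactor w Q Qhat x ≠ 0)
    (hfix : ∀ s, Qhat s = ∫ x, Q s x * profilePlugIn w Q Qhat f x ∂μ)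
    {g : ℝ → X → ℝ} {g' : X → ℝ} (hg0 : g 0 =ᵐ[μ] profilePlugIn w Q Qhat f)
    (hg_nonneg : ∀ᵐ x ∂μ, ∀ᶠ t in 𝓝 0, 0 ≤ g t x)
    (hg' : ∀ᵐ x ∂μ, HasDerivAt (fun t => g t x) (g' x) 0)
    (hlog : HasDerivAt (fun t => ∫ x, Real.log (g t x) * f x ∂μ)
      (∫ x, g' x / profilePlugIn w Q Qhat f x * f x ∂μ) 0)
    (hmass : ∀ s, HasDerivAt (fun t => ∫ x, Q s x * g t x ∂μ) (∫ x, Q s x * g' x ∂μ) 0)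
    (hint : ∀ s, Integrable (fun x => Q s x * g' x) μ) :
    HasDerivAt (fun t => expectedProfileLogLikelihood μ w Q f (g t)) 0 0 := by
  have hvanish : ∀ᵐ x ∂μ, profilePlugIn w Q Qhat f x = 0 → g' x = 0 := by
    filter_upwards [hg0, hg_nonneg, hg'] with x hx hnonneg hderiv hzero
    exact hasDerivAt_eq_zero_of_nonneg_of_eq_zero hderiv hnonneg (hx.trans hzero)
  have hmass0 : ∀ s, ∫ x, Q s x * g 0 x ∂μ = Qhat s := fun s => by
    rw [hfix s]
    exact integral_congr_ae (hg0.mono fun x hx => congrArg (Q s x * ·) hx)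
  have hnorm := hasDerivAt_sum_mul_log w hmass fun s => by rw [hmass0]; exact (hQhat s).ne'
  simp only [hmass0] at hnorm
  rw [integral_div_profilePlugIn_mul hne hvanish hint] at hlog
  simpa only [expectedProfileLogLikelihood, sub_self] using hlog.fun_sub hnorm

end StratifiedSampling

/-- Stationarity of the profile plug-in ĝ_θ in stratified sampling
(Lemma 2.1 / Appendix B). -/
theorem stmt_8
    (S : ℕ) (hS : 0 < S)
    (X : Type) [MeasurableSpace X] (μ : Measure X) [SigmaFinite μ]
    (w : Fin S → ℝ) (hw_pos : ∀ s, 0 < w s) (hw_sum : ∑ s, w s = 1)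
    -- the kernels x ↦ Q_{s|X}(x; θ) at the fixed parameter θ
    (Q : Fin S → X → ℝ) (hQ_meas : ∀ s, Measurable (Q s)) (hQ_nonneg : ∀ s x, 0 ≤ Q s x)
    -- the mixture density f*₀
    (fstar : X → ℝ) (hfstar_meas : Measurable fstar) (hfstar_nonneg : ∀ x, 0 ≤ fstar x)
    -- the profile plug-in: Q̂_s(θ) > 0 and ĝ_θ
    (Qhat : Fin S → ℝ) (hQhat_pos : ∀ s, 0 < Qhat s)
    (ghat : X → ℝ)
    (hghat : ∀ x, ghat x = fstar x / ∑ s, w s * Q s x / Qhat s)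
    -- the denominator is strictly positive μ-a.e.
    (hden_pos : ∀ᵐ x ∂μ, 0 < ∑ s, w s * Q s x / Qhat s)
    -- the fixed-point equations
    (hfix : ∀ s, Qhat s = ∫ x, Q s x * ghat x ∂μ)
    -- a path of perturbations with α₀ = 0, ĝ_θ + α_t ≥ 0, and t-derivative α'₀ at 0
    (α : ℝ → X → ℝ) (hα0 : ∀ x, α 0 x = 0)
    (hα_nonneg : ∀ t x, 0 ≤ ghat x + α t x)
    (α'0 : X → ℝ) (hα'0 : ∀ x, HasDerivAt (fun t => α t x) (α'0 x) 0)
    -- differentiation under the integral sign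
    (hDUI1 : HasDerivAt (fun t => ∫ x, Real.log (ghat x + α t x) * fstar x ∂μ)
      (∫ x, α'0 x / ghat x * fstar x ∂μ) 0)
    (hDUI2 : ∀ s, HasDerivAt (fun t => ∫ x, Q s x * (ghat x + α t x) ∂μ)
      (∫ x, Q s x * α'0 x ∂μ) 0)
    -- the derivatives under the integrals are finite (the integrands are integrable)
    (hint1 : Integrable (fun x => α'0 x / ghat x * fstar x) μ)
    (hint2 : ∀ s, Integrable (fun x => Q s x * α'0 x) μ) :
    -- the expected profile log-likelihood along the path is stationary at t = 0
    HasDerivAt (fun t =>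
      (∫ x, Real.log (ghat x + α t x) * fstar x ∂μ) -
        ∑ s, w s * Real.log (∫ x, Q s x * (ghat x + α t x) ∂μ)) 0 0 := by
  obtain rfl : ghat = profilePlugIn w Q Qhat fstar := funext hghat
  exact stmt_8_general hQhat_pos (hden_pos.mono fun _ hx => hx.ne') hfix
    (.of_forall fun x => by simp only [hα0, add_zero])
    (.of_forall fun x => .of_forall fun t => hα_nonneg t x)
    (.of_forall fun x => (hα'0 x).const_add _) hDUI1 hDUI2 hint2
end

section
/- Non-identifiability of (α, ρ₁) in the reparametrized logistic model (Section 4): With p*_s(x; α, β, ρ₁) := ρ_s f(s|x; α, β) f*₀(x) / ( w₀ Q_{0|X}(x; α, β) + w₁ ρ₁ Q_{1|X}(x; α, β) ) for s ∈ {0, 1}, where ρ₀ := 1, f(y|x; α, β) := exp(y(α + xᵀβ))/(1 + exp(α + xᵀβ)) and Q_{s|X}(x; α, β) := f(s|x; α, β), the parameters α and ρ₁ enter only through α* := α + log ρ₁: for all x ∈ ℝ², α ∈ ℝ, β ∈ ℝ², ρ₁ > 0 and s ∈ {0, 1}, p*_s(x; α, β, ρ₁) = p*_s(x; α + log ρ₁,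 β, 1). -/
open MeasureTheory

/-!
The density of a stratum is a ratio of two expressions linear in the products `ρ_s Q_{s|X}`, so it
sees these products only up to a common factor. The normalizing constant of the logit probabilities
is such a factor, and what remains is `ρ_s exp θ_s = exp (θ_s + log ρ_s)`: multiplying by `ρ_s` and
shifting the intercept by `log ρ_s` are the same operation.
-/

section Strata

variable {ι : Type*} [Fintype ι]

/-- The reparametrized density `p*_s` at a fixed covariate value: `v s` stands for `ρ_s Q_{s|X}`,
and `g` for the value of `f*₀`. It is `0` where the denominator vanishes. -/
noncomputable def stratumDensity (w v : ι → ℝ) (g : ℝ) (s : ι) : ℝ :=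
  v s * g / ∑ t, w t * v t

/-- The multinomial logit (softmax) probability of the class `s` when the classes have linear
predictors `θ`. Binary logistic regression with linear predictor `η` is `θ = ![0, η]`. -/
noncomputable def multinomialLogit (θ : ι → ℝ) (s : ι) : ℝ :=
  Real.exp (θ s) / ∑ t, Real.exp (θ t)

theorem stratumDensity_smul (w v : ι → ℝ) (g : ℝ) {c : ℝ} (hc : c ≠ 0) :
    stratumDensity w (c • v) g = stratumDensity w v g := by
  funext s
  simp only [stratumDensity, Pi.smul_apply, smul_eq_mul, mul_left_comm _ c, mul_assoc c,
    ← Finset.mul_sum]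
  exact mul_div_mul_left _ _ hc

theorem multinomialLogit_eq_smul (θ : ι → ℝ) :
    multinomialLogit θ = (∑ t, Real.exp (θ t))⁻¹ • (Real.exp ∘ θ) := by
  funext s
  exact div_eq_inv_mul _ _

theorem stratumDensity_mul_multinomialLogit_eq_mul_exp (w ρ θ : ι → ℝ) (g : ℝ) :
    stratumDensity w (ρ * multinomialLogit θ) g = stratumDensity w (ρ * Real.exp ∘ θ) g := by
  cases isEmpty_or_nonempty ι with
  | inl _ => exact Subsingleton.elim _ _
  | inr _ =>
    have sum_exp_pos : 0 < ∑ t, Real.exp (θ t) :=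
      Finset.sum_pos (fun t _ => Real.exp_pos (θ t)) Finset.univ_nonempty
    rw [multinomialLogit_eq_smul, mul_smul_comm,
      stratumDensity_smul _ _ _ (inv_ne_zero sum_exp_pos.ne')]

theorem stmt_13_general (w θ : ι → ℝ) (g : ℝ) {ρ : ι → ℝ} (hρ : ∀ s, 0 < ρ s) :
    stratumDensity w (ρ * multinomialLogit θ) g =
      stratumDensity w (1 * multinomialLogit (θ + Real.log ∘ ρ)) g := by
  have mul_exp : ρ * Real.exp ∘ θ = 1 * Real.exp ∘ (θ + Real.log ∘ ρ) := by
    funext s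
    simp [Real.exp_add, Real.exp_log (hρ s), mul_comm]
  rw [stratumDensity_mul_multinomialLogit_eq_mul_exp, mul_exp,
    ← stratumDensity_mul_multinomialLogit_eq_mul_exp]

end Strata

section TwoStrata

theorem stratumDensity_fin_two (w₀ w₁ r g : ℝ) (q : Fin 2 → ℝ) (s : Fin 2) :
    stratumDensity ![w₀, w₁] (![1, r] * q) g s =
      (if s = 0 then 1 else r) * q s * g / (w₀ * q 0 + w₁ * r * q 1) := by
  fin_cases s <;> simp [stratumDensity, mul_assoc]

theorem multinomialLogit_fin_two (η : ℝ) (y : Fin 2) :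
    multinomialLogit ![0, η] y = Real.exp ((y : ℕ) * η) / (1 + Real.exp η) := by
  fin_cases y <;> simp [multinomialLogit]

theorem stratumDensity_logistic_shift (w : Fin 2 → ℝ) (η g : ℝ) {r : ℝ} (hr : 0 < r) :
    stratumDensity w (![1, r] * multinomialLogit ![0, η]) g =
      stratumDensity w (![1, 1] * multinomialLogit ![0, η + Real.log r]) g := by
  have odds_pos : ∀ s, 0 < ![1, r] s := by simp [Fin.forall_fin_two, hr]
  have predictor_shift : ![0, η] + Real.log ∘ ![1, r] = ![0, η + Real.log r] := by
    funext s
    fin_cases s <;> simp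
  have odds_one : (1 : Fin 2 → ℝ) = ![1, 1] := by
    funext s
    fin_cases s <;> rfl
  rw [stmt_13_general w _ g odds_pos, predictor_shift, odds_one]

end TwoStrata

/-- Non-identifiability of (α, ρ₁) in the reparametrized logistic model (Section 4):
the parameters α and ρ₁ enter only through α* = α + log ρ₁. -/
theorem stmt_13
    (w0 w1 : ℝ) (hw0 : 0 < w0) (hw1 : 0 < w1) (hw : w0 + w1 = 1)
    (β : Fin 2 → ℝ)
    -- an arbitrary nonnegative f*₀
    (fstar : (Fin 2 → ℝ) → ℝ) (hfstar : ∀ x, 0 ≤ fstar x)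
    -- the logistic conditional density f(y|x; α, β), as a function of α
    (f : ℝ → Fin 2 → (Fin 2 → ℝ) → ℝ)
    (hf : ∀ a y x, f a y x =
      Real.exp ((y : ℕ) * (a + ∑ i, x i * β i)) / (1 + Real.exp (a + ∑ i, x i * β i)))
    -- Q_{s|X}(x; α, β) = f(s|x; α, β)
    (Q : ℝ → Fin 2 → (Fin 2 → ℝ) → ℝ) (hQ : ∀ a s x, Q a s x = f a s x)
    -- the reparametrized model p*_s(x; α, β, ρ₁), as a function of (α, ρ₁), with ρ₀ = 1
    (pstar : ℝ → ℝ → Fin 2 → (Fin 2 → ℝ) → ℝ)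
    (hpstar : ∀ a r s x, pstar a r s x =
      (if s = 0 then (1 : ℝ) else r) * f a s x * fstar x /
        (w0 * Q a 0 x + w1 * r * Q a 1 x)) :
    ∀ (x : Fin 2 → ℝ) (a : ℝ) (r : ℝ), 0 < r → ∀ s : Fin 2,
      pstar a r s x = pstar (a + Real.log r) 1 s x := by
  intro x a r hr s
  simp only [hpstar, hQ, hf, ← multinomialLogit_fin_two, ← stratumDensity_fin_two]
  rw [stratumDensity_logistic_shift _ _ _ hr, add_right_comm]
end
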